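/- arXiv:dg-ga/9602010 — 2 statements merged into one kernel-verified Lean document; each statement's English description precedes it below -/
import Mathlib

section
/- Let (M, K) be a discrete differential manifold with M finite. If (M, K) is infinite dimensional, i.e. K^r ≠ ∅ for every r ≥ 0, then the relation ⪯ on M is not antisymmetric: there exist i, j ∈ M with i ≠ j, i ⪯ j and j ⪯ i. -/
/-! An element of `K` with more than `|M|` entries repeats some entry. Since consecutive entries are
distinct, it then has a subsequence `(i, j, i)` with `i ≠ j` (`exists_back_and_forth_sublist`), and
closure of `K` under admissible subsequences puts both `(i, j)` and `(j, i)` in `K`. -/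

/-- An admissible sequence over `M`: a nonempty tuple with consecutive entries distinct. -/
def Admissible {M : Type*} (l : List M) : Prop := l ≠ [] ∧ l.Chain' (· ≠ ·)

/-- A discrete differential manifold structure on `M`: a set `K` of admissible
sequences (the nonvanishing basic forms) containing every grade-0 sequence `(i)`
and closed under passing to admissible (not necessarily contiguous) subsequences. -/
structure IsDDM {M : Type*} (K : Set (List M)) : Prop where
  adm : ∀ l ∈ K, Admissible l
  singletons : ∀ i : M, [i] ∈ K
  downClosed : ∀ l ∈ K, ∀ l' : List M, Admissible l' → l'.Sublist l → l' ∈ K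

/-- The reflexive relation `⪯` on `M`: `i ⪯ j` iff `i = j` or `(i,j) ∈ K¹`. -/
def pre {M : Type*} (K : Set (List M)) (i j : M) : Prop := i = j ∨ [i, j] ∈ K

/-- A sequence with consecutive entries distinct and a repeated entry contains a back-and-forth
subsequence `(i, j, i)`: take for `j` the entry directly after the first occurrence of `i`. -/
theorem exists_back_and_forth_sublist {M : Type*} (l : List M)
    (hc : l.IsChain (· ≠ ·)) (hd : ¬ l.Nodup) :
    ∃ i j : M, i ≠ j ∧ [i, j, i].Sublist l := by
  induction l with
  | nil => exact absurd List.nodup_nil hd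
  | cons a t ih =>
    by_cases ha : a ∈ t
    · cases t with
      | nil => simp at ha
      | cons b t =>
        have hab : a ≠ b := (List.isChain_cons_cons.1 hc).1
        have hat : a ∈ t := (List.mem_cons.1 ha).resolve_left hab
        exact ⟨a, b, hab, ((List.singleton_sublist.2 hat).cons_cons b).cons_cons a⟩
    · have ht : ¬ t.Nodup := fun h => hd (List.nodup_cons.2 ⟨ha, h⟩)
      obtain ⟨i, j, hij, hs⟩ := ih hc.tail ht
      exact ⟨i, j, hij, hs.cons a⟩

/-- Lemma 4, first part: if a discrete differential manifold on a
finite set `M` is infinite dimensional (`Kʳ ≠ ∅` for every `r`), then `⪯` is not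
antisymmetric. -/
theorem ddm_infinite_dim_not_antisymm {M : Type*} [Fintype M] [Nonempty M]
    (K : Set (List M)) (hK : IsDDM K)
    (hinf : ∀ r : ℕ, ∃ l ∈ K, l.length = r + 1) :
    ∃ i j : M, i ≠ j ∧ pre K i j ∧ pre K j i := by
  obtain ⟨l, hl, hlen⟩ := hinf (Fintype.card M)
  have hd : ¬ l.Nodup := fun h => by
    have := h.length_le_card
    omega
  obtain ⟨i, j, hij, hs⟩ := exists_back_and_forth_sublist l (hK.adm l hl).2 hd
  refine ⟨i, j, hij, Or.inr ?_, Or.inr ?_⟩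
  · exact hK.downClosed l hl [i, j] ⟨by simp, List.isChain_pair.2 hij⟩
      (List.Sublist.trans (by simp) hs)
  · exact hK.downClosed l hl [j, i] ⟨by simp, List.isChain_pair.2 hij.symm⟩
      ((List.sublist_cons_self i [j, i]).trans hs)
end

section
/- Let P be a geometric simplicial complex with finitely many faces in a finite-dimensional real vector space, and let |P| be its polyhedron. For all x, y ∈ |P|, the intersection V_x ∩ V_y of the star-neighborhoods is either empty or equal to V_z for some z ∈ |P|. Consequently, the simplicial covering T = {V_x : x ∈ |P|} is a base (and not merely a prebase) of the topology τ it generates on |P|. -/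
/-!
The set `V_x` is the interior of the closed star and can be larger than the open star, so it is
described through facets: `y ∈ V_x` iff every facet whose hull contains `y` has a hull that also
contains `x` (`mem_simpV_iff`). If all facets around `y` contain `x`, then `y` has a neighbourhood
meeting only these facets, because the finitely many others have closed hulls missing `y`.
Conversely, moving from `y` slightly towards the barycenter of a facet `t` around `y` gives a point
of the star lying in the relative interior of `t`, so a face witnessing membership in the star
contains `t`, hence is `t`.

If `V_x ∩ V_y` is nonempty, then `x` and `y` lie in the hull of a common facet, which contains
their midpoint `z`. Since the hull of a face is an extreme subset of the hull of any larger face,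
a facet contains `z` iff it contains both `x` and `y`, and therefore `V_x ∩ V_y = V_z`.
-/

open TopologicalSpace

noncomputable section

variable {E : Type*} [NormedAddCommGroup E] [NormedSpace ℝ E]

/-- The star `St(x)` of a point `x` of the polyhedron `|P|`, viewed inside `|P|`
(which carries the subspace topology from `E`): the union of the convex hulls of
the faces whose convex hull contains `x`. -/
def starNbhd (P : Geometry.SimplicialComplex ℝ E) (x : P.space) : Set P.space :=
  {y : P.space | ∃ s ∈ P.faces,
    (x : E) ∈ convexHull ℝ (s : Set E) ∧ (y : E) ∈ convexHull ℝ (s : Set E)}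

/-- The star-neighborhood `V_x = Int_{|P|} St(x)`, the interior of the star taken
in the polyhedron `|P|` with its metric (subspace) topology. -/
def simpV (P : Geometry.SimplicialComplex ℝ E) (x : P.space) : Set P.space :=
  interior (starNbhd P x)

/-- The simplicial covering `T = {V_x : x ∈ |P|}`. -/
def simpCov (P : Geometry.SimplicialComplex ℝ E) : Set (Set P.space) :=
  {U : Set P.space | ∃ x : P.space, U = simpV P x}

/-- The topology `τ` on `|P|` generated by the simplicial covering `T`. -/
def tauP (P : Geometry.SimplicialComplex ℝ E) : TopologicalSpace P.space :=
  TopologicalSpace.generateFrom (simpCov P)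

end

/-- Barycentric coordinates with respect to an affinely independent set are unique, so a point of
the hull of a subset `u` has its coordinates supported on `u`. -/
lemma mem_of_weight_ne_zero {E : Type*} [AddCommGroup E] [Module ℝ E] {t u : Finset E}
    (ht : AffineIndependent ℝ ((↑) : t → E)) (hu : u ⊆ t) {w : E → ℝ} (hw : ∑ v ∈ t, w v = 1)
    (hp : ∑ v ∈ t, w v • v ∈ convexHull ℝ (u : Set E)) {v : E} (hv : v ∈ t) (hwv : w v ≠ 0) :
    v ∈ u := by
  classical
  obtain ⟨c, -, hc1, hcp⟩ := Finset.mem_convexHull'.1 hp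
  by_contra hvu
  have hext : ∀ a ∈ t, a ∉ u → (if a ∈ u then c a else 0) = 0 := by
    intro a _ ha
    simp [ha]
  have h1 : ∑ a ∈ t, (if a ∈ u then c a else 0) = 1 := by
    rw [← Finset.sum_subset hu hext, ← hc1]
    exact Finset.sum_congr rfl fun a ha => by simp [ha]
  have h2 : ∑ a ∈ t, (if a ∈ u then c a else 0) • a = ∑ a ∈ t, w a • a := by
    rw [← hcp, ← Finset.sum_subset hu fun a hat hau => by rw [hext a hat hau, zero_smul]]
    exact Finset.sum_congr rfl fun a ha => by simp [ha]
  have := ht.eq_of_sum_eq_sum_subtype (h1.trans hw.symm) h2 v hv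
  simp only [hvu, if_false] at this
  exact hwv this.symm

/-- The hull of a subset of an affinely independent set `t` is an extreme subset of the hull of
`t`. -/
lemma isExtreme_convexHull_of_subset {E : Type*} [AddCommGroup E] [Module ℝ E] {t u : Finset E}
    (ht : AffineIndependent ℝ ((↑) : t → E)) (hu : u ⊆ t) :
    IsExtreme ℝ (convexHull ℝ (t : Set E)) (convexHull ℝ (u : Set E)) := by
  refine ⟨convexHull_mono (by exact_mod_cast hu), ?_⟩
  intro x hx y hy z hz hxyz
  obtain ⟨a, ha0, ha1, rfl⟩ := Finset.mem_convexHull'.1 hx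
  obtain ⟨b, hb0, hb1, rfl⟩ := Finset.mem_convexHull'.1 hy
  obtain ⟨α, β, hα, hβ, hαβ, rfl⟩ := hxyz
  have hsum : ∑ v ∈ t, (α * a v + β * b v) = 1 := by
    rw [Finset.sum_add_distrib, ← Finset.mul_sum, ← Finset.mul_sum, ha1, hb1]
    linarith
  have hpt : ∑ v ∈ t, (α * a v + β * b v) • v
      = α • ∑ v ∈ t, a v • v + β • ∑ v ∈ t, b v • v := by
    simp only [add_smul, mul_smul, Finset.sum_add_distrib, Finset.smul_sum]
  have hzero : ∀ v ∈ t, v ∉ u → a v = 0 := by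
    intro v hv hvu
    by_contra hav
    refine hvu (mem_of_weight_ne_zero ht hu hsum (hpt ▸ hz) hv ?_)
    have h1 := mul_pos hα (lt_of_le_of_ne (ha0 v hv) (Ne.symm hav))
    have h2 := mul_nonneg hβ.le (hb0 v hv)
    linarith
  refine Finset.mem_convexHull'.2 ⟨a, fun v hv => ha0 v (hu hv), ?_, ?_⟩
  · rw [← ha1]
    exact Finset.sum_subset hu hzero
  · exact Finset.sum_subset hu fun v hv hvu => by rw [hzero v hv hvu, zero_smul]

section

variable {E : Type*} [NormedAddCommGroup E] [NormedSpace ℝ E]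
  {P : Geometry.SimplicialComplex ℝ E}

/-- If a point `z` of the open segment between two points of the hull of a face `t` lies in the
hull of a face `s`, then the first endpoint lies in the hull of `s ∩ t`: this hull contains `z` and
is extreme in the hull of `t`. -/
lemma mem_convexHull_inter_of_openSegment {s t : Finset E} [DecidableEq E] (hs : s ∈ P.faces)
    (ht : t ∈ P.faces) {x y z : E} (hx : x ∈ convexHull ℝ (t : Set E))
    (hy : y ∈ convexHull ℝ (t : Set E)) (hz : z ∈ openSegment ℝ x y)
    (hzs : z ∈ convexHull ℝ (s : Set E)) :
    x ∈ convexHull ℝ ((s ∩ t : Finset E) : Set E) := by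
  have hzt : z ∈ convexHull ℝ (t : Set E) :=
    (convex_convexHull ℝ _).openSegment_subset hx hy hz
  have hzst : z ∈ convexHull ℝ ((s ∩ t : Finset E) : Set E) := by
    rw [Finset.coe_inter]
    exact P.inter_subset_convexHull hs ht ⟨hzs, hzt⟩
  exact (isExtreme_convexHull_of_subset (P.indep ht) Finset.inter_subset_right).2 hx hy hzst hz

lemma exists_facet_of_mem_face (hfin : P.faces.Finite) {s : Finset E} (hs : s ∈ P.faces) :
    ∃ t ∈ P.facets, s ⊆ t := by
  obtain ⟨t, hst, ht⟩ := hfin.exists_le_maximal hs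
  exact ⟨t, ⟨ht.prop, fun r hr htr => htr.antisymm (ht.le_of_ge hr htr)⟩, hst⟩

lemma exists_facet_of_mem_space (hfin : P.faces.Finite) (x : P.space) :
    ∃ t ∈ P.facets, (x : E) ∈ convexHull ℝ (t : Set E) := by
  obtain ⟨s, hs, hxs⟩ := Geometry.SimplicialComplex.mem_space_iff.1 x.2
  obtain ⟨t, ht, hst⟩ := exists_facet_of_mem_face hfin hs
  exact ⟨t, ht, convexHull_mono (by exact_mod_cast hst) hxs⟩

lemma mem_facet_of_mem_simpV {x y : P.space} (hy : y ∈ simpV P x) {t : Finset E}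
    (ht : t ∈ P.facets) (hyt : (y : E) ∈ convexHull ℝ (t : Set E)) :
    (x : E) ∈ convexHull ℝ (t : Set E) := by
  classical
  have htne : t.Nonempty := P.nonempty_of_mem_faces ht.1
  have hcard : (0 : ℝ) < t.card := by exact_mod_cast htne.card_pos
  -- `p` is the barycenter of `t`, all of whose coordinates are positive.
  have hsum : ∑ _v ∈ t, (t.card : ℝ)⁻¹ = 1 := by
    rw [Finset.sum_const, nsmul_eq_mul, mul_inv_cancel₀ hcard.ne']
  set p : E := ∑ v ∈ t, (t.card : ℝ)⁻¹ • v with hp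
  have hpt : p ∈ convexHull ℝ (t : Set E) :=
    Finset.mem_convexHull'.2 ⟨fun _ => (t.card : ℝ)⁻¹, fun _ _ => by positivity, hsum, rfl⟩
  obtain ⟨O, hO, hOy⟩ := mem_nhds_subtype _ _ _ |>.1 (mem_interior_iff_mem_nhds.1 hy)
  have htend : Filter.Tendsto (fun ε : ℝ => AffineMap.lineMap (y : E) p ε)
      (nhdsWithin 0 (Set.Ioi 0)) (nhds (y : E)) := by
    have hc : Continuous (fun ε : ℝ => AffineMap.lineMap (y : E) p ε) :=
      AffineMap.lineMap_continuous
    have := hc.tendsto 0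
    simp only [AffineMap.lineMap_apply_zero] at this
    exact this.mono_left nhdsWithin_le_nhds
  obtain ⟨ε, hεO, hε⟩ := ((htend.eventually hO).and
    (Ioo_mem_nhdsGT (zero_lt_one (α := ℝ)))).exists
  set q : E := AffineMap.lineMap (y : E) p ε with hq
  have hqseg : q ∈ openSegment ℝ p (y : E) := by
    rw [openSegment_symm, openSegment_eq_image_lineMap]
    exact ⟨ε, hε, rfl⟩
  have hqt : q ∈ convexHull ℝ (t : Set E) :=
    (convex_convexHull ℝ _).openSegment_subset hpt hyt hqseg
  have hqstar : (⟨q, Geometry.SimplicialComplex.convexHull_subset_space ht.1 hqt⟩ : P.space)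
      ∈ starNbhd P x := hOy hεO
  obtain ⟨s, hs, hxs, hqs⟩ := hqstar
  have hps := mem_convexHull_inter_of_openSegment hs ht.1 hpt hyt hqseg hqs
  have hts : t ⊆ s := fun v hv => Finset.mem_of_mem_inter_left
    (mem_of_weight_ne_zero (P.indep ht.1) Finset.inter_subset_right hsum hps hv
      (inv_ne_zero hcard.ne'))
  rw [ht.2 hs hts]
  exact hxs

/-- `V_x` consists of the points all of whose surrounding facets contain `x`. -/
lemma mem_simpV_iff (hfin : P.faces.Finite) {x y : P.space} :
    y ∈ simpV P x ↔ ∀ t ∈ P.facets, (y : E) ∈ convexHull ℝ (t : Set E) →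
      (x : E) ∈ convexHull ℝ (t : Set E) := by
  refine ⟨fun hy t ht hyt => mem_facet_of_mem_simpV hy ht hyt, fun h => ?_⟩
  -- The union of the facets missing `y`; its complement is the required neighbourhood.
  let C : Set E := ⋃ t ∈ {t ∈ P.facets | (y : E) ∉ convexHull ℝ (t : Set E)},
    convexHull ℝ (t : Set E)
  have hC : IsClosed C := by
    refine Set.Finite.isClosed_biUnion
      (hfin.subset fun t ht => Geometry.SimplicialComplex.facets_subset ht.1) fun t _ => ?_
    exact t.finite_toSet.isClosed_convexHull ℝ
  refine mem_interior.2 ⟨(↑) ⁻¹' Cᶜ, ?_, hC.isOpen_compl.preimage continuous_subtype_val, ?_⟩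
  · intro w hw
    obtain ⟨t, ht, hwt⟩ := exists_facet_of_mem_space hfin w
    refine ⟨t, ht.1, h t ht ?_, hwt⟩
    by_contra hyt
    exact hw (Set.mem_biUnion (show t ∈ {t ∈ P.facets | _} from ⟨ht, hyt⟩) hwt)
  · intro hy
    obtain ⟨t, ht, hyt⟩ := Set.mem_iUnion₂.1 hy
    exact ht.2 hyt

lemma simpV_inter_eq (hfin : P.faces.Finite) (x y : P.space) :
    simpV P x ∩ simpV P y = ∅ ∨ ∃ z : P.space, simpV P x ∩ simpV P y = simpV P z := by
  classical
  refine (Set.eq_empty_or_nonempty _).imp id ?_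
  rintro ⟨w, hwx, hwy⟩
  obtain ⟨t, ht, hwt⟩ := exists_facet_of_mem_space hfin w
  have hxt := mem_facet_of_mem_simpV hwx ht hwt
  have hyt := mem_facet_of_mem_simpV hwy ht hwt
  have hz : midpoint ℝ (x : E) y ∈ openSegment ℝ (x : E) y := midpoint_mem_openSegment _ _
  have hzt := (convex_convexHull ℝ (t : Set E)).openSegment_subset hxt hyt hz
  refine ⟨⟨_, Geometry.SimplicialComplex.convexHull_subset_space ht.1 hzt⟩, ?_⟩
  ext v
  simp only [Set.mem_inter_iff, mem_simpV_iff hfin]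
  constructor
  · rintro ⟨h1, h2⟩ s hs hvs
    exact (convex_convexHull ℝ _).openSegment_subset (h1 s hs hvs) (h2 s hs hvs) hz
  · intro h
    have hsub : ∀ s : Finset E, convexHull ℝ ((s ∩ t : Finset E) : Set E)
        ⊆ convexHull ℝ (s : Set E) := fun s =>
      convexHull_mono (by exact_mod_cast Finset.inter_subset_left)
    refine ⟨fun s hs hvs => hsub s ?_, fun s hs hvs => hsub s ?_⟩
    · exact mem_convexHull_inter_of_openSegment hs.1 ht.1 hxt hyt hz (h s hs hvs)
    · rw [openSegment_symm] at hz
      exact mem_convexHull_inter_of_openSegment hs.1 ht.1 hyt hxt hz (h s hs hvs)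

end

/-- for a geometric simplicial complex `P` with finitely many faces
in a finite-dimensional real vector space, the intersection `V_x ∩ V_y` of two
star-neighborhoods is either empty or equal to some `V_z`; consequently the
simplicial covering `T` is a base (not merely a prebase) of the topology `τ` it
generates on `|P|`. -/
theorem simplicial_covering_is_basis {E : Type*} [NormedAddCommGroup E]
    [NormedSpace ℝ E] [FiniteDimensional ℝ E]
    (P : Geometry.SimplicialComplex ℝ E) (hfin : P.faces.Finite) :
    (∀ x y : P.space, simpV P x ∩ simpV P y = ∅ ∨
      ∃ z : P.space, simpV P x ∩ simpV P y = simpV P z) ∧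
    @TopologicalSpace.IsTopologicalBasis P.space (tauP P) (simpCov P) := by
  refine ⟨simpV_inter_eq hfin, ?_⟩
  refine @IsTopologicalBasis.mk _ (tauP P) _ ?_ ?_ rfl
  · rintro _ ⟨x, rfl⟩ _ ⟨y, rfl⟩ w hw
    rcases simpV_inter_eq hfin x y with h | ⟨z, h⟩
    · simp [h] at hw
    · exact ⟨simpV P z, ⟨z, rfl⟩, h ▸ hw, h.ge⟩
  · refine Set.eq_univ_of_forall fun x => ⟨simpV P x, ⟨x, rfl⟩, ?_⟩
    exact (mem_simpV_iff hfin).2 fun _ _ h => h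
end
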